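/- Let G be a finite simple graph with vertex set V and nonnegative edge weights w, and let W, W⋆ ⊆ V. Then the difference of cut weights decomposes over the connected components of the induced subgraph on W Δ W⋆: |C(W)| − |C(W⋆)| = Σ_R ( w(∂R ∩ C(W)) − w(∂R ∩ C(W⋆)) ), where the sum runs over all connected components R of the subgraph of G induced on W Δ W⋆. -/

import Mathlib

open scoped Classical symmDiff

/-- The cut of a vertex set `W`: the edges of `G` with exactly one endpoint in `W`. -/
def graphCut {V : Type*} (G : SimpleGraph V) (W : Set V) : Set (Sym2 V) :=
  {e | e ∈ G.edgeSet ∧ ∃ a b, e = s(a, b) ∧ a ∈ W ∧ b ∉ W}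

/-- The total weight of a set of edges. -/
noncomputable def edgeWeight {V : Type*} [Fintype V] [DecidableEq V]
    (w : Sym2 V → ℝ) (S : Set (Sym2 V)) : ℝ :=
  ∑ e : Sym2 V, S.indicator w e

/-!
Taking cuts turns symmetric differences of vertex sets into symmetric differences of edge sets, so
`C(W)` and `C(W⋆)` differ exactly in the edges of `C(W ∆ W⋆)`. Two adjacent vertices of `W ∆ W⋆`
lie in the same component, so an edge leaving a component leaves `W ∆ W⋆`; hence `C(W ∆ W⋆)` is
the disjoint union of the boundaries `∂R`, and the weights of its two parts inside `C(W)` and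
`C(W⋆)` can be summed component by component.
-/

section Combinatorics

variable {V : Type*} {G : SimpleGraph V}

theorem mk_mem_graphCut {W : Set V} {a b : V} :
    s(a, b) ∈ graphCut G W ↔ G.Adj a b ∧ ¬(a ∈ W ↔ b ∈ W) := by
  refine and_congr_right fun _ => ⟨?_, fun hab => ?_⟩
  · rintro ⟨x, y, hxy, hx, hy⟩
    rcases Sym2.eq_iff.1 hxy with ⟨rfl, rfl⟩ | ⟨rfl, rfl⟩ <;> tauto
  · by_cases ha : a ∈ W
    · exact ⟨a, b, rfl, ha, by tauto⟩
    · exact ⟨b, a, Sym2.eq_swap, by tauto, ha⟩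

theorem graphCut_symmDiff (A B : Set V) :
    graphCut G (A ∆ B) = graphCut G A ∆ graphCut G B := by
  ext e
  induction e with | _ a b
  simp only [Set.mem_symmDiff, mk_mem_graphCut]
  tauto

theorem graphCut_symmDiff_inter_left (A B : Set V) :
    graphCut G (A ∆ B) ∩ graphCut G A = graphCut G A \ graphCut G B := by
  rw [graphCut_symmDiff]
  grind

theorem graphCut_symmDiff_inter_right (A B : Set V) :
    graphCut G (A ∆ B) ∩ graphCut G B = graphCut G B \ graphCut G A := by
  rw [symmDiff_comm, graphCut_symmDiff_inter_left]

variable {S : Set V}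

theorem graphCut_component_subset (c : (G.induce S).ConnectedComponent) :
    graphCut G (Subtype.val '' c.supp) ⊆ graphCut G S := by
  rintro _ ⟨hab, _, b, rfl, ⟨a, ha, rfl⟩, hb⟩
  refine ⟨hab, a, b, rfl, a.2, fun hbS => hb ⟨⟨b, hbS⟩, ?_, rfl⟩⟩
  have hadj : (G.induce S).Adj a ⟨b, hbS⟩ := hab
  exact (SimpleGraph.ConnectedComponent.connectedComponentMk_eq_of_adj hadj).symm.trans ha

theorem mk_mem_graphCut_component {a b : V} (hab : G.Adj a b) (ha : a ∈ S) (hb : b ∉ S)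
    (c : (G.induce S).ConnectedComponent) :
    s(a, b) ∈ graphCut G (Subtype.val '' c.supp) ↔
      (G.induce S).connectedComponentMk ⟨a, ha⟩ = c := by
  simp [mk_mem_graphCut, hab, ha, hb]

theorem iUnion_graphCut_component :
    ⋃ c : (G.induce S).ConnectedComponent, graphCut G (Subtype.val '' c.supp) = graphCut G S := by
  refine (Set.iUnion_subset graphCut_component_subset).antisymm ?_
  rintro _ ⟨hab, a, b, rfl, ha, hb⟩
  exact Set.mem_iUnion.2 ⟨_, (mk_mem_graphCut_component hab ha hb _).2 rfl⟩

theorem pairwise_disjoint_graphCut_component :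
    Pairwise (Function.onFun Disjoint fun c : (G.induce S).ConnectedComponent =>
      graphCut G (Subtype.val '' c.supp)) := by
  refine fun c c' hne => Set.disjoint_left.2 fun e hc hc' => hne ?_
  obtain ⟨hab, a, b, rfl, ha, hb⟩ := graphCut_component_subset c hc
  rw [mk_mem_graphCut_component hab ha hb] at hc hc'
  exact hc.symm.trans hc'

end Combinatorics

section Summation

variable {M : Type*} [AddCommGroup M] [UniformSpace M] [IsUniformAddGroup M] [CompleteSpace M]

theorem summable_subtype_of_subset {α : Type*} {f : α → M} {s t : Set α}
    (ht : Summable fun x : t => f x) (hst : s ⊆ t) : Summable fun x : s => f x :=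
  ht.comp_injective (Set.inclusion_injective hst)

theorem tsum_inter_add_tsum_sdiff [T2Space M] {α : Type*} {f : α → M} {s : Set α}
    (hs : Summable fun x : s => f x) (t : Set α) :
    ∑' x : ↥(s ∩ t), f x + ∑' x : ↥(s \ t), f x = ∑' x : s, f x := by
  rw [← Summable.tsum_union_disjoint Set.disjoint_sdiff_inter.symm
    (summable_subtype_of_subset hs Set.inter_subset_left)
    (summable_subtype_of_subset hs Set.sdiff_subset), Set.inter_union_sdiff]

theorem hasSum_tsum_iUnion {α ι : Type*} {f : α → M} {s : ι → Set α}
    (hs : Pairwise (Function.onFun Disjoint s)) (hf : Summable fun x : ⋃ i, s i => f x) :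
    HasSum (fun i => ∑' x : s i, f x) (∑' x : ⋃ i, s i, f x) := by
  have hsigma := (Set.unionEqSigmaOfDisjoint hs).symm.hasSum_iff.2 hf.hasSum
  simp only [Function.comp_def, Set.coe_unionEqSigmaOfDisjoint_symm_apply] at hsigma
  exact hsigma.sigma fun i => (summable_subtype_of_subset hf (Set.subset_iUnion s i)).hasSum

variable {V : Type*} (G : SimpleGraph V) {w : Sym2 V → M}

theorem hasSum_graphCut_component_inter (S : Set V) {T : Set (Sym2 V)}
    (hT : Summable fun e : T => w e) :
    HasSum (fun c : (G.induce S).ConnectedComponent =>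
        ∑' e : ↥(graphCut G (Subtype.val '' c.supp) ∩ T), w e)
      (∑' e : ↥(graphCut G S ∩ T), w e) := by
  have hunion : ⋃ c : (G.induce S).ConnectedComponent, graphCut G (Subtype.val '' c.supp) ∩ T =
      graphCut G S ∩ T := by
    rw [← Set.iUnion_inter, iUnion_graphCut_component]
  rw [← hunion]
  refine hasSum_tsum_iUnion (fun c c' hne => ?_)
    (summable_subtype_of_subset hT (hunion.trans_subset Set.inter_subset_right))
  exact (pairwise_disjoint_graphCut_component hne).mono Set.inter_subset_left Set.inter_subset_left

theorem cut_difference_decomposition_general [T2Space M] {W Wstar : Set V}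
    (hW : Summable fun e : graphCut G W => w e)
    (hWstar : Summable fun e : graphCut G Wstar => w e) :
    HasSum (fun c : (G.induce (W ∆ Wstar)).ConnectedComponent =>
        ∑' e : ↥(graphCut G (Subtype.val '' c.supp) ∩ graphCut G W), w e
          - ∑' e : ↥(graphCut G (Subtype.val '' c.supp) ∩ graphCut G Wstar), w e)
      (∑' e : graphCut G W, w e - ∑' e : graphCut G Wstar, w e) := by
  have hsum := (hasSum_graphCut_component_inter G (W ∆ Wstar) hW).sub
    (hasSum_graphCut_component_inter G (W ∆ Wstar) hWstar)
  rw [graphCut_symmDiff_inter_left, graphCut_symmDiff_inter_right] at hsum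
  rwa [← tsum_inter_add_tsum_sdiff hW (graphCut G Wstar),
    ← tsum_inter_add_tsum_sdiff hWstar (graphCut G W), Set.inter_comm (graphCut G Wstar),
    add_sub_add_left_eq_sub]

end Summation

theorem edgeWeight_eq_tsum {V : Type*} [Fintype V] [DecidableEq V] (w : Sym2 V → ℝ)
    (S : Set (Sym2 V)) : edgeWeight w S = ∑' e : S, w e := by
  rw [edgeWeight, tsum_subtype, tsum_fintype]

/-- **Component decomposition of the cut-weight difference.**  The difference
`|C(W)| − |C(W⋆)|` decomposes as a sum over the connected components `R` of the
subgraph of `G` induced on `W ∆ W⋆` of `w(∂R ∩ C(W)) − w(∂R ∩ C(W⋆))`. -/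
theorem cut_difference_decomposition {V : Type*} [Fintype V] [DecidableEq V]
    (G : SimpleGraph V) (w : Sym2 V → ℝ) (hw : ∀ e, 0 ≤ w e)
    (W Wstar : Set V) :
    edgeWeight w (graphCut G W) - edgeWeight w (graphCut G Wstar) =
      ∑ c : (SimpleGraph.induce (W ∆ Wstar) G).ConnectedComponent,
        (edgeWeight w (graphCut G (Subtype.val '' c.supp) ∩ graphCut G W)
          - edgeWeight w (graphCut G (Subtype.val '' c.supp) ∩ graphCut G Wstar)) := by
  simpa only [edgeWeight_eq_tsum, tsum_fintype] using
    (cut_difference_decomposition_general G (w := w) .of_finite .of_finite).tsum_eq.symm
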